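/- arXiv:2503.17589 — 6 statements merged into one kernel-verified Lean document; each statement's English description precedes it below -/
import Mathlib

section
/- Root location for the characteristic quadratic, stable case (used in the proof of Theorem 1, Claim 3): Let θ ∈ ℂ with Re θ < 0 and let c be a real number with c > |Im θ| / √(−Re θ). Then every λ ∈ ℂ satisfying λ² + cλ = θ has Re λ < 0. -/
/-!
Write `λ = a + ib`. The real and imaginary parts of the equation are
`b² = a² + ca - Re θ` and `Im θ = b (2a + c)`, while the hypothesis on `c` says that `c > 0`
and `(Im θ)² < c² (-Re θ)`. If `a ≥ 0`, then `b² ≥ -Re θ` and `(2a + c)² ≥ c²`, so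
`(Im θ)² = b² (2a + c)² ≥ c² (-Re θ)`, a contradiction.
-/

/-- Root location for the characteristic quadratic, stable case: if `Re θ < 0`
and `c > |Im θ| / √(−Re θ)`, then every root `λ` of `λ² + cλ = θ` has
`Re λ < 0`. -/
theorem quadratic_roots_stable (θ : ℂ) (hθ : θ.re < 0) (c : ℝ)
    (hc : |θ.im| / Real.sqrt (-θ.re) < c) :
    ∀ lam : ℂ, lam ^ 2 + (c : ℂ) * lam = θ → lam.re < 0 := by
  intro lam h
  have hpos : 0 < -θ.re := by linarith
  have hc0 : 0 < c := lt_of_le_of_lt (by positivity) hc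
  -- Squaring the hypothesis on `c` gives `(Im θ)² < c² (-Re θ)`.
  have hsq : θ.im ^ 2 < c ^ 2 * (-θ.re) := by
    rw [div_lt_iff₀ (Real.sqrt_pos.2 hpos)] at hc
    have := pow_lt_pow_left₀ hc (abs_nonneg _) two_ne_zero
    rwa [sq_abs, mul_pow, Real.sq_sqrt hpos.le] at this
  have hre : lam.re ^ 2 - lam.im ^ 2 + c * lam.re = θ.re := by
    rw [← h]; simp [pow_two]
  have him : lam.im * (2 * lam.re + c) = θ.im := by
    rw [← h]; simp [pow_two]; ring
  by_contra! ha
  have h1 : -θ.re ≤ lam.im ^ 2 := by nlinarith [mul_nonneg hc0.le ha]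
  have h2 : c ^ 2 ≤ (2 * lam.re + c) ^ 2 := pow_le_pow_left₀ hc0.le (by linarith) 2
  have h3 := mul_le_mul h2 h1 hpos.le (sq_nonneg _)
  rw [← him] at hsq
  linarith [mul_pow lam.im (2 * lam.re + c) 2, mul_comm (lam.im ^ 2) ((2 * lam.re + c) ^ 2)]
end

section
/- Hurwitz property of the DDF Jacobian at the target (proof of Theorem 1, Claim 3): Let A be a real n×n matrix (n ≥ 1) all of whose complex eigenvalues have negative real part. Let g_max = max{|Im θ| : θ a complex eigenvalue of A} and r_max = max{Re θ : θ a complex eigenvalue of A} (so r_max < 0). If k_d and b are real numbers with k_d > g_max/√(−r_max) and b ≥ 1, then every complex eigenvalue of the 2n×2n block matrix fromBlocks(0, I, A, −(k_d b)·I) = [[0, I],[A, −k_d b I]] has negative real part. -/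
/-! An eigenvector of the block matrix with eigenvalue `lam` has the form `(v, lam • v)` with
`A v = (lam ^ 2 + c * lam) v` and `c = kd * b`, so `θ = lam ^ 2 + c * lam` is an eigenvalue of `A`
(`exists_eigenvalue_of_block`). Write `lam = x + i y` and suppose `x ≥ 0`. From
`Re θ = x ^ 2 - y ^ 2 + c * x ≤ rmax` one gets `y ^ 2 ≥ -rmax`, hence
`|Im θ| = |y| * (2 * x + c) ≥ √(-rmax) * kd > gmax`, contradicting the maximality of `gmax`.
The two suprema really bound the eigenvalues because the spectrum is finite. -/

theorem finite_eigenvalues {n : ℕ} (M : Matrix (Fin n) (Fin n) ℂ) :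
    {θ : ℂ | (M - θ • 1).det = 0}.Finite := by
  refine (Polynomial.finite_setOf_isRoot M.charpoly_monic.ne_zero).subset fun θ hθ => ?_
  have hθ' : (M - θ • 1).det = 0 := hθ
  have h : Matrix.scalar (Fin n) θ - M = -(M - θ • 1) := by
    rw [neg_sub, Matrix.smul_one_eq_diagonal, Matrix.scalar_apply]
  rw [Set.mem_setOf_eq, Polynomial.IsRoot.def, Matrix.eval_charpoly, h, Matrix.det_neg, hθ',
    mul_zero]

theorem exists_eigenvalue_of_block {n : ℕ} (M : Matrix (Fin n) (Fin n) ℂ) (c lam : ℂ)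
    (h : (Matrix.fromBlocks 0 1 M (-(c • 1)) - lam • 1).det = 0) :
    (M - (lam ^ 2 + c * lam) • 1).det = 0 := by
  obtain ⟨u, hu, hmul⟩ := Matrix.exists_mulVec_eq_zero_iff.mpr h
  obtain ⟨v, w, rfl⟩ : ∃ v w : Fin n → ℂ, u = Sum.elim v w :=
    ⟨u ∘ Sum.inl, u ∘ Sum.inr, (Sum.elim_comp_inl_inr u).symm⟩
  rw [Matrix.sub_mulVec, Matrix.fromBlocks_mulVec, Matrix.smul_mulVec, Matrix.one_mulVec] at hmul
  have hw : w = lam • v := by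
    funext i
    have := congrFun hmul (Sum.inl i)
    simpa [sub_eq_zero] using this
  have hMv : M.mulVec v = (lam ^ 2 + c * lam) • v := by
    funext i
    have := congrFun hmul (Sum.inr i)
    simp [hw, Matrix.neg_mulVec, Matrix.smul_mulVec] at this
    simp only [Pi.smul_apply, smul_eq_mul]
    linear_combination this
  refine Matrix.exists_mulVec_eq_zero_iff.mp ⟨v, ?_, ?_⟩
  · rintro rfl
    apply hu
    rw [hw, smul_zero]
    funext i
    cases i <;> rfl
  · rw [Matrix.sub_mulVec, hMv, Matrix.smul_mulVec, Matrix.one_mulVec, sub_self]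


/-- Hurwitz property of the DDF Jacobian at the target: if all complex
eigenvalues of the real matrix `A` have negative real part, `g_max` and
`r_max` are the maxima of `|Im θ|` and `Re θ` over the complex eigenvalues
`θ` of `A` (so `r_max < 0`), and `k_d > g_max/√(−r_max)`, `b ≥ 1`, then every
complex eigenvalue of `[[0, I],[A, −k_d b I]]` has negative real part. -/
theorem ddf_jacobian_hurwitz {n : ℕ} (hn : 1 ≤ n)
    (A : Matrix (Fin n) (Fin n) ℝ)
    (hA : ∀ θ : ℂ, ((A.map Complex.ofReal) - θ • 1).det = 0 → θ.re < 0)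
    (gmax rmax : ℝ)
    (hg : gmax = sSup ((fun θ : ℂ => |θ.im|) ''
      {θ : ℂ | ((A.map Complex.ofReal) - θ • 1).det = 0}))
    (hrm : rmax = sSup ((fun θ : ℂ => θ.re) ''
      {θ : ℂ | ((A.map Complex.ofReal) - θ • 1).det = 0}))
    (hrneg : rmax < 0)
    (kd b : ℝ) (hkd : gmax / Real.sqrt (-rmax) < kd) (hb : 1 ≤ b) :
    ∀ lam : ℂ,
      (Matrix.fromBlocks 0 1 (A.map Complex.ofReal)
          (-(((kd * b : ℝ) : ℂ) • 1)) - lam • 1).det = 0 →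
      lam.re < 0 := by
  intro lam hlam
  have hθ := exists_eigenvalue_of_block _ _ _ hlam
  set θ : ℂ := lam ^ 2 + ((kd * b : ℝ) : ℂ) * lam with hθdef
  have hfin := finite_eigenvalues (A.map Complex.ofReal)
  have him : |θ.im| ≤ gmax := by
    rw [hg]
    exact le_csSup (hfin.image _).bddAbove ⟨θ, hθ, rfl⟩
  have hre : θ.re ≤ rmax := by
    rw [hrm]
    exact le_csSup (hfin.image _).bddAbove ⟨θ, hθ, rfl⟩
  have hre_eq : θ.re = lam.re ^ 2 - lam.im ^ 2 + kd * b * lam.re := by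
    rw [hθdef, Complex.add_re, Complex.re_ofReal_mul, pow_two, Complex.mul_re]
    ring
  have him_eq : θ.im = lam.im * (2 * lam.re + kd * b) := by
    rw [hθdef, Complex.add_im, Complex.im_ofReal_mul, pow_two, Complex.mul_im]
    ring
  have hs : 0 < √(-rmax) := Real.sqrt_pos.mpr (by linarith)
  have hkd0 : 0 < kd :=
    (div_nonneg ((abs_nonneg _).trans him) hs.le).trans_lt hkd
  have hkb : kd ≤ kd * b := le_mul_of_one_le_right hkd0.le hb
  by_contra! hx
  have hy : √(-rmax) ≤ |lam.im| := by
    apply Real.le_sqrt_of_sq_le _ |>.trans (Real.sqrt_sq_eq_abs _).le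
    rw [Real.sq_sqrt (by linarith)]
    nlinarith [mul_nonneg (hkd0.le.trans hkb) hx, sq_nonneg lam.re]
  have hlow : √(-rmax) * kd ≤ |θ.im| := by
    rw [him_eq, abs_mul]
    exact mul_le_mul hy (le_trans (by linarith) (le_abs_self _)) hkd0.le (abs_nonneg _)
  rw [div_lt_iff₀ hs] at hkd
  linarith
end

section
/- Saddle property of the DDF Jacobian at undesired equilibria (proof of Theorem 1, Claim 3): Let A be a real n×n matrix (n ≥ 1) having at least one complex eigenvalue with positive real part, and let c > 0 be real. Then the 2n×2n block matrix fromBlocks(0, I, A, −c·I) = [[0, I],[A, −cI]] has at least one complex eigenvalue with positive real part and at least one complex eigenvalue with negative real part. -/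
/-!
If `A v = θ v` and `λ ^ 2 + c λ = θ`, then `(v, λ v)` is an eigenvector of `[[0, I], [A, -cI]]` with
eigenvalue `λ`. The two roots are `(-c ± r) / 2` with `r ^ 2 = c ^ 2 + 4 θ`. Taking real parts gives
`(re r) ^ 2 ≥ re (r ^ 2) = c ^ 2 + 4 re θ > c ^ 2`, so `|re r| > c` and the real parts of the two
roots have opposite signs.
-/

/-- A root `lam` of `lam ^ 2 + c * lam = θ`, with `θ` an eigenvalue of `B`, is an eigenvalue of the
companion-type block matrix. -/
theorem det_companion_eq_zero {n : ℕ} (B : Matrix (Fin n) (Fin n) ℂ) (c θ lam : ℂ)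
    (hB : (B - θ • 1).det = 0) (h : lam ^ 2 + c * lam = θ) :
    (Matrix.fromBlocks 0 1 B (-(c • 1)) - lam • 1).det = 0 := by
  obtain ⟨v, hv, hBv⟩ := Matrix.exists_mulVec_eq_zero_iff.mpr hB
  refine Matrix.exists_mulVec_eq_zero_iff.mp ⟨Sum.elim v (lam • v), ?_, ?_⟩
  · intro h0
    exact hv (funext fun i => congrFun h0 (Sum.inl i))
  · rw [Matrix.sub_mulVec, Matrix.smul_mulVec, Matrix.one_mulVec, sub_eq_zero] at hBv
    rw [Matrix.sub_mulVec, Matrix.fromBlocks_mulVec, Matrix.smul_mulVec, Matrix.one_mulVec]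
    ext (i | i)
    · simp
    · simp [Matrix.neg_mulVec, Matrix.smul_mulVec, hBv]
      linear_combination (-v i) * h

/-- Saddle property of the DDF Jacobian at undesired equilibria: if the real
matrix `A` has a complex eigenvalue with positive real part and `c > 0`, then
`[[0, I],[A, −cI]]` has a complex eigenvalue with positive real part and one
with negative real part. -/
theorem ddf_jacobian_saddle {n : ℕ} (hn : 1 ≤ n)
    (A : Matrix (Fin n) (Fin n) ℝ)
    (hA : ∃ θ : ℂ, ((A.map Complex.ofReal) - θ • 1).det = 0 ∧ 0 < θ.re)
    (c : ℝ) (hc : 0 < c) :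
    (∃ lam : ℂ,
      (Matrix.fromBlocks 0 1 (A.map Complex.ofReal) (-((c : ℂ) • 1)) - lam • 1).det = 0 ∧
      0 < lam.re) ∧
    (∃ lam : ℂ,
      (Matrix.fromBlocks 0 1 (A.map Complex.ofReal) (-((c : ℂ) • 1)) - lam • 1).det = 0 ∧
      lam.re < 0) := by
  obtain ⟨θ, hdet, hθ⟩ := hA
  obtain ⟨r, hr, hre⟩ : ∃ r : ℂ, r ^ 2 = (c : ℂ) ^ 2 + 4 * θ ∧ c < r.re := by
    obtain ⟨r, hr⟩ := IsAlgClosed.exists_pow_nat_eq ((c : ℂ) ^ 2 + 4 * θ) (n := 2) (by norm_num)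
    have hsq := congrArg Complex.re hr
    simp [pow_two] at hsq
    have habs : c < |r.re| := by
      refine lt_of_pow_lt_pow_left₀ 2 (abs_nonneg _) ?_
      rw [sq_abs]
      nlinarith [mul_self_nonneg r.im]
    rcases lt_abs.mp habs with h | h
    · exact ⟨r, hr, h⟩
    · exact ⟨-r, by rw [neg_sq, hr], by simpa using h⟩
  refine ⟨⟨(1 / 2 : ℝ) * (-c + r), det_companion_eq_zero _ c θ _ hdet ?_, ?_⟩,
    ⟨(1 / 2 : ℝ) * (-c - r), det_companion_eq_zero _ c θ _ hdet ?_, ?_⟩⟩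
  · push_cast
    linear_combination hr / 4
  · rw [Complex.re_ofReal_mul, Complex.add_re, Complex.neg_re, Complex.ofReal_re]
    linarith
  · push_cast
    linear_combination hr / 4
  · rw [Complex.re_ofReal_mul, Complex.sub_re, Complex.neg_re, Complex.ofReal_re]
    linarith
end

section
/- Appendix Lemma 5 and Theorem 2, Claim 2 (exponential decay and monotonic decrease of the velocity tracking error): In the VTF closed-loop setting, suppose d_x(t) > 0 for all t ≥ 0, and set z(t) = v(t) − v_d(x(t)). Then: (i) ‖z(t)‖ ≤ ‖z(0)‖ e^{−k_d t} for all t ≥ 0; (ii) if z(0) = 0 then z(t) = 0 for all t ≥ 0; (iii) if z(0) ≠ 0 then the function t ↦ ‖z(t)‖ is strictly decreasing on [0,∞). -/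
/-!
The planner is evaluated along the trajectory itself, so by the chain rule the feedforward term
`∇v_d(x)[v]` cancels the derivative of `v_d(x(t))`, and the error `z = v - v_d(x)` solves the
scalar-coefficient linear equation `z' = -a z` with `a(t) = k_d β(d_x(t))`. The coefficient is
continuous, because the trajectory stays in the free space, and satisfies `a ≥ k_d`. Hence
`z(t) = e^{-∫₀ᵗ a} z(0)` (`eq_exp_neg_integral_smul`), and since `t ↦ ∫₀ᵗ a` grows at rate at
least `k_d` (`mul_sub_le_integral_sub`), the three claims are read off from this formula.
In particular `z` never vanishes if `z(0) ≠ 0`, which is what makes the decrease strict.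
-/

open Metric Filter Set

/-- The solution formula for `z' = -a z` on `[0,∞)` with continuous scalar coefficient: the
integrating factor `e^{∫₀ᵗ a}` makes `e^{∫₀ᵗ a} z(t)` constant. -/
lemma eq_exp_neg_integral_smul {E : Type*} [NormedAddCommGroup E] [NormedSpace ℝ E]
    {a : ℝ → ℝ} (ha : Continuous a) {z : ℝ → E}
    (hz : ∀ t, 0 ≤ t → HasDerivAt z (-(a t • z t)) t) {t : ℝ} (ht : 0 ≤ t) :
    z t = Real.exp (-∫ s in (0:ℝ)..t, a s) • z 0 := by
  have hw : ∀ s, 0 ≤ s →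
      HasDerivAt (fun u => Real.exp (∫ τ in (0:ℝ)..u, a τ) • z u) 0 s := by
    intro s hs
    have h := ((ha.integral_hasStrictDerivAt 0 s).hasDerivAt.exp).smul (hz s hs)
    rw [smul_neg, smul_smul, neg_add_cancel] at h
    exact h
  have hconst := constant_of_has_deriv_right_zero
    (f := fun u => Real.exp (∫ τ in (0:ℝ)..u, a τ) • z u) (a := 0) (b := t)
    (fun s hs => (hw s hs.1).continuousAt.continuousWithinAt)
    (fun s hs => (hw s hs.1).hasDerivWithinAt) t ⟨ht, le_rfl⟩
  simp only [intervalIntegral.integral_same, Real.exp_zero, one_smul] at hconst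
  rw [← hconst, smul_smul, ← Real.exp_add, neg_add_cancel, Real.exp_zero, one_smul]

lemma mul_sub_le_integral_sub {a : ℝ → ℝ} (ha : Continuous a) {k : ℝ} (hk : ∀ t, k ≤ a t)
    {s t : ℝ} (hst : s ≤ t) :
    k * (t - s) ≤ (∫ τ in (0:ℝ)..t, a τ) - ∫ τ in (0:ℝ)..s, a τ := by
  rw [intervalIntegral.integral_interval_sub_left (ha.intervalIntegrable _ _)
    (ha.intervalIntegrable _ _)]
  have h := intervalIntegral.integral_mono_on hst
    (continuous_const.intervalIntegrable (μ := MeasureTheory.volume) s t)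
    (ha.intervalIntegrable s t) (fun τ _ => hk τ)
  rw [intervalIntegral.integral_const, smul_eq_mul] at h
  linarith

/-- Appendix Lemma 5 and Theorem 2, Claim 2 (exponential decay and monotonic
decrease of the velocity tracking error): in the VTF closed-loop setting, if
`d_x(t) > 0` for all `t ≥ 0` and `z(t) = v(t) − v_d(x(t))`, then
(i) `‖z(t)‖ ≤ ‖z(0)‖ e^{−k_d t}`; (ii) if `z(0) = 0` then `z(t) = 0` for all
`t ≥ 0`; (iii) if `z(0) ≠ 0` then `t ↦ ‖z(t)‖` is strictly decreasing on
`[0,∞)`. -/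
theorem vtf_velocity_error_decay
    {n : ℕ} (hn : 1 ≤ n)
    (O : Set (EuclideanSpace ℝ (Fin n))) (hOne : O.Nonempty) (hOcl : IsClosed O)
    (r : ℝ) (hr : 0 < r)
    -- damping profile
    (ε₁ : ℝ) (hε₁ : ε₁ ∈ Set.Ioo (0:ℝ) 1)
    (β : ℝ → ℝ) (hβc : ContinuousOn β (Set.Ioi 0))
    (hβmono : AntitoneOn β (Set.Ioi 0))
    (hβ1 : ∀ p, 0 < p → 1 ≤ β p)
    (hβsmall : ∀ p, 0 < p → p ≤ ε₁ → β p = 1 / p)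
    -- first-order planner
    (vd : EuclideanSpace ℝ (Fin n) → EuclideanSpace ℝ (Fin n))
    (D L : ℝ) (hD : 0 < D) (hL : 0 < L)
    (hvdC1 : ContDiffOn ℝ 1 vd {y | 0 < infDist y O - r})
    (hvdbound : ∀ y ∈ {y : EuclideanSpace ℝ (Fin n) | 0 < infDist y O - r}, ‖vd y‖ ≤ D)
    (hvdderiv : ∀ y ∈ {y : EuclideanSpace ℝ (Fin n) | 0 < infDist y O - r},
      ‖fderiv ℝ vd y‖ ≤ L)
    -- VTF closed loop
    (kd : ℝ) (hkd : 0 < kd)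
    (x v : ℝ → EuclideanSpace ℝ (Fin n))
    (hxc : ContinuousOn x (Set.Ici 0)) (hvc : ContinuousOn v (Set.Ici 0))
    (hode : ∀ t ≥ (0:ℝ), 0 < infDist (x t) O - r →
      HasDerivAt x (v t) t ∧
      HasDerivAt v (-((kd * β (infDist (x t) O - r)) • (v t - vd (x t)))
        + (fderiv ℝ vd (x t)) (v t)) t)
    (hpos : ∀ t ≥ (0:ℝ), 0 < infDist (x t) O - r) :
    (∀ t ≥ (0:ℝ), ‖v t - vd (x t)‖ ≤ ‖v 0 - vd (x 0)‖ * Real.exp (-kd * t)) ∧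
    (v 0 - vd (x 0) = 0 → ∀ t ≥ (0:ℝ), v t - vd (x t) = 0) ∧
    (v 0 - vd (x 0) ≠ 0 → StrictAntiOn (fun t => ‖v t - vd (x t)‖) (Set.Ici 0)) := by
  have hopen : IsOpen {y : EuclideanSpace ℝ (Fin n) | 0 < infDist y O - r} :=
    isOpen_lt continuous_const ((continuous_infDist_pt O).sub continuous_const)
  -- Freezing the coefficient at its initial value for `t < 0` makes it continuous on all of `ℝ`.
  obtain ⟨a, ha⟩ : ∃ a : ℝ → ℝ, a = fun t => kd * β (infDist (x (max t 0)) O - r) := ⟨_, rfl⟩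
  have hac : Continuous a := by
    have hx : Continuous fun t : ℝ => x (max t 0) :=
      hxc.comp_continuous (continuous_id.max continuous_const) fun t => le_max_right t 0
    have hd : Continuous fun t : ℝ => infDist (x (max t 0)) O - r :=
      ((continuous_infDist_pt O).comp hx).sub continuous_const
    rw [ha]
    exact continuous_const.mul
      (hβc.comp_continuous hd fun t => hpos _ (le_max_right t 0))
  have hak : ∀ t, kd ≤ a t := by
    intro t
    rw [ha]
    exact le_mul_of_one_le_right hkd.le (hβ1 _ (hpos _ (le_max_right t 0)))
  have hz : ∀ t, 0 ≤ t → HasDerivAt (fun t => v t - vd (x t)) (-(a t • (v t - vd (x t)))) t := by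
    intro t ht
    obtain ⟨hx', hv'⟩ := hode t ht (hpos t ht)
    have hvd : HasFDerivAt vd (fderiv ℝ vd (x t)) (x t) :=
      ((hvdC1.contDiffAt (hopen.mem_nhds (hpos t ht))).differentiableAt one_ne_zero).hasFDerivAt
    have h := hv'.sub (hvd.comp_hasDerivAt t hx')
    rw [add_sub_cancel_right] at h
    simp only [ha, max_eq_left ht]
    exact h
  have hsol : ∀ t, 0 ≤ t →
      v t - vd (x t) = Real.exp (-∫ s in (0:ℝ)..t, a s) • (v 0 - vd (x 0)) :=
    fun t ht => eq_exp_neg_integral_smul hac hz ht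
  have hnorm : ∀ t, 0 ≤ t →
      ‖v t - vd (x t)‖ = ‖v 0 - vd (x 0)‖ * Real.exp (-∫ s in (0:ℝ)..t, a s) := by
    intro t ht
    rw [hsol t ht, norm_smul, Real.norm_eq_abs, Real.abs_exp, mul_comm]
  refine ⟨fun t ht => ?_, fun h0 t ht => ?_, fun h0 s hs t ht hst => ?_⟩
  · rw [hnorm t ht]
    have h := mul_sub_le_integral_sub hac hak ht
    rw [intervalIntegral.integral_same] at h
    gcongr
    linarith
  · rw [hsol t ht, h0, smul_zero]
  · show ‖v t - vd (x t)‖ < ‖v s - vd (x s)‖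
    rw [hnorm t ht, hnorm s hs]
    have h := mul_sub_le_integral_sub hac hak hst.le
    have h' : 0 < kd * (t - s) := mul_pos hkd (sub_pos.2 hst)
    exact mul_lt_mul_of_pos_left (Real.exp_lt_exp.2 (by linarith)) (norm_pos_iff.2 h0)
end

section
/- Lemma 3 (extension of Barbalat's lemma): Let f : [0,∞) → ℝ be differentiable and let g : [0,∞) → ℝ be uniformly continuous. If there exists a constant c ∈ ℝ such that f(t) → c as t → ∞ and f′(t) − g(t) → 0 as t → ∞, then f′(t) → 0 and g(t) → 0 as t → ∞. -/
/-!
On a window `[t, t + h]` of fixed length `h`, the mean value theorem gives a point `ξ` with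
`f' ξ = (f (t + h) - f t) / h`, which tends to `0` as `t → ∞` because `f` converges. Since `g` is
close to `f'` near infinity, `g ξ` is small, and if `h` is below the modulus of uniform continuity
of `g`, then `g t` is close to `g ξ`. Hence `g → 0`, and `f' = (f' - g) + g → 0`.
-/

open Filter

/-- Lemma 3 (extension of Barbalat's lemma): if `f : [0,∞) → ℝ` is
differentiable with derivative `f′`, `g : [0,∞) → ℝ` is uniformly continuous,
`f(t) → c` and `f′(t) − g(t) → 0` as `t → ∞`, then `f′(t) → 0` and
`g(t) → 0` as `t → ∞`. -/
theorem barbalat_extension (f f' g : ℝ → ℝ) (c : ℝ)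
    (hf : ∀ t ≥ (0:ℝ), HasDerivAt f (f' t) t)
    (hg : UniformContinuousOn g (Set.Ici 0))
    (hfc : Tendsto f atTop (nhds c))
    (hdiff : Tendsto (fun t => f' t - g t) atTop (nhds 0)) :
    Tendsto f' atTop (nhds 0) ∧ Tendsto g atTop (nhds 0) := by
  have hg0 : Tendsto g atTop (nhds 0) := by
    rw [Metric.tendsto_atTop]
    intro ε hε
    obtain ⟨δ, hδ, hgδ⟩ := Metric.uniformContinuousOn_iff.1 hg (ε / 3) (by positivity)
    set h : ℝ := δ / 2 with hh
    have hpos : 0 < h := by positivity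
    have hslope : Tendsto (fun t => (f (t + h) - f t) / h) atTop (nhds 0) := by
      simpa using ((hfc.comp (tendsto_atTop_add_const_right atTop h tendsto_id)).sub hfc).div_const h
    obtain ⟨A, hA⟩ := Metric.tendsto_atTop.1 hslope (ε / 3) (by positivity)
    obtain ⟨B, hB⟩ := Metric.tendsto_atTop.1 hdiff (ε / 3) (by positivity)
    refine ⟨max 0 (max A B), fun t ht => ?_⟩
    simp only [ge_iff_le, max_le_iff] at ht
    obtain ⟨ht0, htA, htB⟩ := ht
    obtain ⟨ξ, ⟨htξ, hξt⟩, hξ⟩ := exists_hasDerivAt_eq_slope f f' (show t < t + h by linarith)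
      (fun x hx => (hf x (ht0.trans hx.1)).continuousAt.continuousWithinAt)
      (fun x hx => hf x (ht0.trans hx.1.le))
    rw [add_sub_cancel_left] at hξ
    have h1 := hA t htA
    have h2 := hB ξ (htB.trans htξ.le)
    have h3 := hgδ t ht0 ξ (ht0.trans htξ.le)
      (by rw [Real.dist_eq, abs_lt]; constructor <;> linarith)
    rw [← hξ] at h1
    rw [Real.dist_eq, abs_lt] at h1 h2 h3 ⊢
    constructor <;> linarith [h1.1, h1.2, h2.1, h2.2, h3.1, h3.2]
  exact ⟨by simpa using hdiff.add hg0, hg0⟩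
end

section
/- Spectrum of the VTF Jacobian block matrix (proof of Theorem 2, Claim 4): Let n ≥ 1, B an n×n complex matrix, and c ∈ ℂ. Let J be the 2n×2n block matrix fromBlocks(0, I, c·B, B − c·I) = [[0, I],[cB, B − cI]]. Then for every λ ∈ ℂ, det(J − λ I_{2n}) = (λ + c)ⁿ · det(λ I_n − B). Consequently, λ is an eigenvalue of J if and only if λ = −c or λ is an eigenvalue of B. -/
/-!
Conjugating `J = [[0, I],[cB, B - cI]]` by the unipotent matrix `[[I, 0],[-cI, I]]` gives the block
upper triangular matrix `[[-cI, I],[0, B]]`. Hence `det (J - λI) = det (-(λ + c)I) * det (B - λI)`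
(`det_vtf_jacobian_sub_smul_one`). The two factors each contribute a sign `(-1)ⁿ` on passing to
`(λ + c)ⁿ * det (λI - B)`, and these cancel.
-/

theorem det_vtf_jacobian_sub_smul_one {n : ℕ} (B : Matrix (Fin n) (Fin n) ℂ) (c lam : ℂ) :
    (Matrix.fromBlocks 0 1 (c • B) (B - c • 1) - lam • 1).det
      = (-(lam + c)) ^ n * (B - lam • 1).det := by
  -- `(J - λI) P = P T` with `P` unipotent and `T` block triangular; no inverse of `P` is needed.
  have key : (Matrix.fromBlocks 0 (1 : Matrix (Fin n) (Fin n) ℂ) (c • B) (B - c • 1) - lam • 1)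
        * Matrix.fromBlocks 1 0 (-c • (1 : Matrix (Fin n) (Fin n) ℂ)) 1
      = Matrix.fromBlocks 1 0 (-c • (1 : Matrix (Fin n) (Fin n) ℂ)) 1
        * Matrix.fromBlocks (-(lam + c) • 1) 1 0 (B - lam • 1) := by
    rw [← Matrix.fromBlocks_one, Matrix.fromBlocks_smul, sub_eq_add_neg _ (Matrix.fromBlocks _ _ _ _),
      Matrix.fromBlocks_neg, Matrix.fromBlocks_add,
      Matrix.fromBlocks_multiply, Matrix.fromBlocks_multiply]
    congr 1
    · simp; module
    · simp
    · simp; module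
    · simp; module
  have h := congrArg Matrix.det key
  simpa only [Matrix.det_mul, Matrix.det_fromBlocks_zero₁₂, Matrix.det_fromBlocks_zero₂₁,
    Matrix.det_smul, Matrix.det_one, Fintype.card_fin, mul_one, one_mul] using h

/-- Spectrum of the VTF Jacobian block matrix: for
`J = [[0, I],[cB, B − cI]]`, one has
`det(J − λ I) = (λ + c)ⁿ det(λ I − B)`; consequently `λ` is an eigenvalue of
`J` iff `λ = −c` or `λ` is an eigenvalue of `B`. -/
theorem vtf_jacobian_block_spectrum {n : ℕ} (hn : 1 ≤ n)
    (B : Matrix (Fin n) (Fin n) ℂ) (c : ℂ) :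
    ∀ lam : ℂ,
      (Matrix.fromBlocks 0 1 (c • B) (B - c • 1) - lam • 1).det
        = (lam + c) ^ n * (lam • 1 - B).det ∧
      ((Matrix.fromBlocks 0 1 (c • B) (B - c • 1) - lam • 1).det = 0 ↔
        (lam = -c ∨ (B - lam • 1).det = 0)) := by
  intro lam
  rw [det_vtf_jacobian_sub_smul_one]
  constructor
  · rw [← neg_sub B, Matrix.det_neg, Fintype.card_fin, neg_pow]
    ring
  · rw [mul_eq_zero, pow_eq_zero_iff (Nat.one_le_iff_ne_zero.mp hn), neg_eq_zero,
      add_eq_zero_iff_eq_neg]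
end
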